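/- arXiv:1311.0297 — 9 statements merged into one kernel-verified Lean document; each statement's English description precedes it below -/
import Mathlib

section
/- Let X be a set and let L be a nonempty subset of [0,∞]^{X×X} that is a sublattice, i.e., closed under binary pointwise suprema and binary pointwise infima. Then the following are equivalent: (i) L is compact in the product topology; (ii) L is closed in the product topology; (iii) L is a complete sublattice, i.e., for every nonempty subset S of L both the pointwise supremum and the pointwise infimum of S belong to L. -/
open scoped ENNReal

/-!
A product of complete linear orders is a compact Hausdorff space, so its compact subsets are its
closed subsets. A closed set that is stable under binary suprema contains the supremum of each of
its nonempty subsets `S`, because that supremum is the limit of the directed family of finite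
suprema of elements of `S`; dually for infima. Conversely, if a filter on a complete sublattice `L`
converges to `f`, then `f` is its lower limit coordinate by coordinate, hence also in the product
lattice, and a lower limit is a supremum of infima of subsets of `L`.
-/

open Filter Topology

section DirectedSuprema

variable {α : Type*}

theorem dirSupClosed_of_isClosed [Preorder α] [TopologicalSpace α] [SupConvergenceClass α]
    {s : Set α} (hs : IsClosed s) : DirSupClosed s := by
  intro d hds hne hdir a ha
  have := hne.to_subtype
  have : IsDirectedOrder d := directedOn_iff_isDirectedOrder.1 hdir
  exact hs.mem_of_tendsto (SupConvergenceClass.tendsto_coe_atTop_isLUB a d ha)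
    (Eventually.of_forall fun x => hds x.2)

theorem sSup_mem_of_supClosed_of_dirSupClosed [CompleteLattice α] {s t : Set α}
    (hsup : SupClosed s) (hdir : DirSupClosed s) (hts : t ⊆ s) (hne : t.Nonempty) :
    sSup t ∈ s :=
  hdir (supClosure_min hts hsup) (hne.mono subset_supClosure) supClosed_supClosure.directedOn
    (isLUB_supClosure.2 (isLUB_sSup t))

theorem sSup_mem_of_supClosed_of_isClosed [CompleteLattice α] [TopologicalSpace α]
    [SupConvergenceClass α] {s t : Set α} (hsup : SupClosed s) (hs : IsClosed s) (hts : t ⊆ s)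
    (hne : t.Nonempty) : sSup t ∈ s :=
  sSup_mem_of_supClosed_of_dirSupClosed hsup (dirSupClosed_of_isClosed hs) hts hne

theorem sInf_mem_of_infClosed_of_isClosed [CompleteLattice α] [TopologicalSpace α]
    [InfConvergenceClass α] {s t : Set α} (hinf : InfClosed s) (hs : IsClosed s) (hts : t ⊆ s)
    (hne : t.Nonempty) : sInf t ∈ s :=
  sSup_mem_of_supClosed_of_isClosed (α := αᵒᵈ) hinf.dual hs hts hne

end DirectedSuprema

/-- A complete sublattice: a set containing the supremum and the infimum of each of its nonempty
subsets. Unlike for Mathlib's bundled `CompleteSublattice`, the empty subset is excluded, so `⊥`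
and `⊤` need not belong to the set. -/
def IsCompleteSublattice {α : Type*} [CompleteLattice α] (L : Set α) : Prop :=
  ∀ S ⊆ L, S.Nonempty → sSup S ∈ L ∧ sInf S ∈ L

theorem isCompleteSublattice_of_isSublattice_of_isClosed {α : Type*} [CompleteLattice α]
    [TopologicalSpace α] [SupConvergenceClass α] [InfConvergenceClass α] {L : Set α}
    (hL : IsSublattice L) (hc : IsClosed L) : IsCompleteSublattice L :=
  fun _ hS hne => ⟨sSup_mem_of_supClosed_of_isClosed hL.supClosed hc hS hne,
    sInf_mem_of_infClosed_of_isClosed hL.infClosed hc hS hne⟩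

theorem IsCompleteSublattice.liminf_mem {α β : Type*} [CompleteLattice α] {L : Set α}
    (hL : IsCompleteSublattice L) {F : Filter β} [F.NeBot] {u : β → α}
    (hu : ∀ᶠ b in F, u b ∈ L) : liminf u F ∈ L := by
  let T : Set (Set β) := {s | s ∈ F ∧ s ⊆ u ⁻¹' L}
  have liminf_eq_sSup : liminf u F = sSup ((fun s => sInf (u '' s)) '' T) := by
    simp only [sSup_image, sInf_image]
    exact (F.basis_sets.restrict_subset hu).liminf_eq_iSup_iInf
  have sInf_image_subset : (fun s => sInf (u '' s)) '' T ⊆ L := by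
    rintro _ ⟨s, ⟨hs, hsL⟩, rfl⟩
    exact (hL _ (Set.image_subset_iff.2 hsL) ((nonempty_of_mem hs).image u)).2
  have hT : T.Nonempty := ⟨u ⁻¹' L, hu, subset_rfl⟩
  rw [liminf_eq_sSup]
  exact (hL _ sInf_image_subset (hT.image _)).1

section Pi

variable {ι : Type*} {α : ι → Type*}

theorem liminf_pi_apply [∀ i, CompleteLattice (α i)] {β : Type*} (u : β → ∀ i, α i)
    (F : Filter β) (i : ι) : liminf u F i = liminf (fun b => u b i) F := by
  simp only [liminf_eq_iSup_iInf, iSup_apply, iInf_apply]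

variable [∀ i, CompleteLinearOrder (α i)] [∀ i, TopologicalSpace (α i)]
  [∀ i, OrderTopology (α i)]

theorem liminf_eq_of_tendsto_pi {β : Type*} {F : Filter β} [F.NeBot] {u : β → ∀ i, α i}
    {f : ∀ i, α i} (hu : Tendsto u F (𝓝 f)) : liminf u F = f := by
  funext i
  rw [liminf_pi_apply]
  exact (hu.apply_nhds i).liminf_eq

theorem IsCompleteSublattice.isClosed_pi {L : Set (∀ i, α i)} (hL : IsCompleteSublattice L) :
    IsClosed L := by
  refine isClosed_iff_forall_filter.2 fun f F _ hFL hFf => ?_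
  rw [← liminf_eq_of_tendsto_pi (u := id) hFf]
  exact hL.liminf_mem (le_principal_iff.1 hFL)

end Pi

theorem stmt1_general {ι : Type*} {α : ι → Type*} [∀ i, CompleteLinearOrder (α i)]
    [∀ i, TopologicalSpace (α i)] [∀ i, OrderTopology (α i)] {L : Set (∀ i, α i)}
    (hL : IsSublattice L) :
    (IsCompact L ↔ IsClosed L) ∧ (IsClosed L ↔ IsCompleteSublattice L) :=
  ⟨⟨IsCompact.isClosed, IsClosed.isCompact⟩,
    ⟨isCompleteSublattice_of_isSublattice_of_isClosed hL, IsCompleteSublattice.isClosed_pi⟩⟩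

/-- For a nonempty sublattice `L` of `[0,∞]^{X×X}` (closed under binary
pointwise sups and infs), the following are equivalent: `L` is compact in the product
topology; `L` is closed; `L` is a complete sublattice (closed under pointwise sups and
infs of arbitrary nonempty subsets). -/
theorem stmt1 (X : Type*) (L : Set (X × X → ℝ≥0∞)) (hne : L.Nonempty)
    (hsup : ∀ d ∈ L, ∀ m ∈ L, d ⊔ m ∈ L) (hinf : ∀ d ∈ L, ∀ m ∈ L, d ⊓ m ∈ L) :
    (IsCompact L ↔ IsClosed L) ∧
    (IsClosed L ↔ ∀ S ⊆ L, S.Nonempty → sSup S ∈ L ∧ sInf S ∈ L) :=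
  stmt1_general ⟨fun d hd m hm => hsup d hd m hm, fun d hd m hm => hinf d hd m hm⟩
end

section
/- Let X be a set containing two distinct elements. Then there exist weight structures d, m : X × X → [0,∞], each satisfying axioms (0), (s) and (Δ), whose pointwise infimum d ⊓ m also satisfies (0), (s) and (Δ), such that: (i) for the max-symmetrization Σ_!(p)(x,y) = max(p(x,y), p(y,x)), one has Σ_!(d ⊓ m) ≠ Σ_!(d) ⊓ Σ_!(m) (pointwise infimum on the right); and (ii) for the min-symmetrization Σ_*(p)(x,y) = min(p(x,y), p(y,x)), one has Σ_*(d ⊔ m) ≠ Σ_*(d) ⊔ Σ_*(m) (pointwise supremum on the right). Consequently Σ_! does not preserve binary meets and Σ_* does not preserve binary joins on W_{0,s,Δ}. -/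
open scoped ENNReal

/-- Axiom (0). -/
def Ax0 {X : Type*} (d : X × X → ℝ≥0∞) : Prop := ∀ x : X, d (x, x) = 0

/-- Axiom (s). -/
def AxSep {X : Type*} (d : X × X → ℝ≥0∞) : Prop :=
  ∀ x y : X, d (x, y) = 0 → d (y, x) = 0 → x = y

/-- Axiom (Δ). -/
def AxTri {X : Type*} (d : X × X → ℝ≥0∞) : Prop :=
  ∀ x y z : X, d (x, z) ≤ d (x, y) + d (y, z)

/-- The max-symmetrization `Σ_!`. -/
def symMax {X : Type*} (q : X × X → ℝ≥0∞) : X × X → ℝ≥0∞ :=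
  fun p => q p ⊔ q (p.2, p.1)

/-- The min-symmetrization `Σ_*`. -/
def symMin {X : Type*} (q : X × X → ℝ≥0∞) : X × X → ℝ≥0∞ :=
  fun p => q p ⊓ q (p.2, p.1)

/-!
Take `m` to be the transpose of `d`. Then `d ⊓ m = Σ_*(d)` and `d ⊔ m = Σ_!(d)` are symmetric, so
they are fixed by both symmetrizations, while `Σ_!(m) = Σ_!(d)` and `Σ_*(m) = Σ_*(d)`. Each of the
two preservation equalities therefore reads `Σ_*(d) = Σ_!(d)`, that is, `d` is symmetric. It remains
to find an asymmetric `d` for which the axioms are robust enough to survive `Σ_*`: off the diagonal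
let `d` take values in `[1, 2]`, where every triangle inequality holds.
-/

section Axioms

variable {X : Type*} {q : X × X → ℝ≥0∞}

theorem Ax0.comp_swap (h : Ax0 q) : Ax0 (q ∘ Prod.swap) := h

theorem AxSep.comp_swap (h : AxSep q) : AxSep (q ∘ Prod.swap) :=
  fun x y hxy hyx => h x y hyx hxy

theorem AxTri.comp_swap (h : AxTri q) : AxTri (q ∘ Prod.swap) :=
  fun x y z => (h z y x).trans_eq (add_comm _ _)

theorem axSep_of_ne_zero (hq : ∀ ⦃x y⦄, x ≠ y → q (x, y) ≠ 0) : AxSep q :=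
  fun _ _ hxy _ => by_contra fun hne => hq hne hxy

theorem axTri_of_mem_Icc {c C : ℝ≥0∞} (hC : C ≤ c + c) (h0 : Ax0 q)
    (hq : ∀ ⦃x y⦄, x ≠ y → q (x, y) ∈ Set.Icc c C) : AxTri q := by
  intro x y z
  rcases eq_or_ne x z with rfl | hxz
  · exact (h0 x).trans_le zero_le
  rcases eq_or_ne x y with rfl | hxy
  · exact le_add_self
  rcases eq_or_ne y z with rfl | hyz
  · exact le_self_add
  calc q (x, z) ≤ C := (hq hxz).2
    _ ≤ c + c := hC
    _ ≤ q (x, y) + q (y, z) := add_le_add (hq hxy).1 (hq hyz).1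

theorem Ax0.symMin (h : Ax0 q) : Ax0 (symMin q) :=
  fun x => (inf_idem _).trans (h x)

theorem symMin_mem_of_ne {s : Set ℝ≥0∞} (hq : ∀ ⦃x y⦄, x ≠ y → q (x, y) ∈ s) ⦃x y : X⦄
    (hxy : x ≠ y) : symMin q (x, y) ∈ s :=
  LinearOrder.infClosed s (hq hxy) (hq hxy.symm)

end Axioms

section Transpose

variable {X : Type*} (q : X × X → ℝ≥0∞)

theorem inf_comp_swap : q ⊓ q ∘ Prod.swap = symMin q := rfl

theorem sup_comp_swap : q ⊔ q ∘ Prod.swap = symMax q := rfl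

theorem symMin_comp_swap : symMin (q ∘ Prod.swap) = symMin q :=
  funext fun _ => inf_comm _ _

theorem symMax_comp_swap : symMax (q ∘ Prod.swap) = symMax q :=
  funext fun _ => sup_comm _ _

theorem symMax_symMin : symMax (symMin q) = symMin q := by
  rw [← sup_comp_swap]
  exact sup_eq_left.mpr (symMin_comp_swap q).le

theorem symMin_symMax : symMin (symMax q) = symMax q := by
  rw [← inf_comp_swap]
  exact inf_eq_left.mpr (symMax_comp_swap q).ge

variable {q}

theorem symMin_eq_symMax_iff : symMin q = symMax q ↔ q = q ∘ Prod.swap := by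
  rw [← inf_comp_swap, ← sup_comp_swap, inf_eq_sup]

theorem symMax_inf_comp_swap_eq_iff :
    symMax (q ⊓ q ∘ Prod.swap) = symMax q ⊓ symMax (q ∘ Prod.swap) ↔ q = q ∘ Prod.swap := by
  rw [inf_comp_swap, symMax_symMin, symMax_comp_swap, inf_idem, symMin_eq_symMax_iff]

theorem symMin_sup_comp_swap_eq_iff :
    symMin (q ⊔ q ∘ Prod.swap) = symMin q ⊔ symMin (q ∘ Prod.swap) ↔ q = q ∘ Prod.swap := by
  rw [sup_comp_swap, symMin_symMax, symMin_comp_swap, sup_idem, eq_comm, symMin_eq_symMax_iff]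

end Transpose

section DepartureWeight

variable {X : Type*} (w : X → ℝ≥0∞)

/-- The weight structure that charges `w x` for leaving `x`, whatever the destination. It supplies
asymmetric examples with prescribed values off the diagonal. -/
noncomputable def departureWeight : X × X → ℝ≥0∞ :=
  (Set.diagonal X)ᶜ.indicator (w ∘ Prod.fst)

theorem ax0_departureWeight : Ax0 (departureWeight w) :=
  fun _ => Set.indicator_of_notMem (not_not_intro rfl) _

variable {w} {x y : X}

theorem departureWeight_of_ne (hxy : x ≠ y) : departureWeight w (x, y) = w x :=
  Set.indicator_of_mem hxy _

theorem departureWeight_mem_of_ne {s : Set ℝ≥0∞} (hw : ∀ x, w x ∈ s) (hxy : x ≠ y) :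
    departureWeight w (x, y) ∈ s := by
  rw [departureWeight_of_ne hxy]
  exact hw x

theorem departureWeight_ne_comp_swap (hw : w x ≠ w y) :
    departureWeight w ≠ departureWeight w ∘ Prod.swap := by
  have hxy : x ≠ y := ne_of_apply_ne w hw
  intro h
  apply hw
  calc w x = departureWeight w (x, y) := (departureWeight_of_ne hxy).symm
    _ = departureWeight w (y, x) := congrFun h (x, y)
    _ = w y := departureWeight_of_ne hxy.symm

end DepartureWeight

/-- On a set with two distinct elements there are weight structures `d, m`
satisfying (0), (s), (Δ), whose pointwise infimum also satisfies (0), (s), (Δ), with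
`Σ_!(d ⊓ m) ≠ Σ_!(d) ⊓ Σ_!(m)` and `Σ_*(d ⊔ m) ≠ Σ_*(d) ⊔ Σ_*(m)`. -/
theorem stmt5 (X : Type*) (a b : X) (hab : a ≠ b) :
    ∃ d m : X × X → ℝ≥0∞,
      (Ax0 d ∧ AxSep d ∧ AxTri d) ∧ (Ax0 m ∧ AxSep m ∧ AxTri m) ∧
      (Ax0 (d ⊓ m) ∧ AxSep (d ⊓ m) ∧ AxTri (d ⊓ m)) ∧
      symMax (d ⊓ m) ≠ symMax d ⊓ symMax m ∧
      symMin (d ⊔ m) ≠ symMin d ⊔ symMin m := by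
  classical
  let w : X → ℝ≥0∞ := fun x => if x = a then 1 else 2
  have hw (x : X) : w x ∈ Set.Icc 1 2 := by
    by_cases hx : x = a <;> simp [w, hx]
  have hwab : w a ≠ w b := by simp [w, hab.symm]
  let d := departureWeight w
  have hd0 : Ax0 d := ax0_departureWeight w
  have hd ⦃x y : X⦄ (hxy : x ≠ y) : d (x, y) ∈ Set.Icc 1 2 :=
    departureWeight_mem_of_ne hw hxy
  have hdne ⦃x y : X⦄ (hxy : x ≠ y) : d (x, y) ≠ 0 := (one_pos.trans_le (hd hxy).1).ne'
  have hdSep : AxSep d := axSep_of_ne_zero hdne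
  have hdTri : AxTri d := axTri_of_mem_Icc one_add_one_eq_two.ge hd0 hd
  have hasymm : d ≠ d ∘ Prod.swap := departureWeight_ne_comp_swap hwab
  exact ⟨d, d ∘ Prod.swap, ⟨hd0, hdSep, hdTri⟩,
    ⟨hd0.comp_swap, hdSep.comp_swap, hdTri.comp_swap⟩,
    ⟨hd0.symMin, axSep_of_ne_zero (symMin_mem_of_ne (s := {0}ᶜ) hdne),
      axTri_of_mem_Icc one_add_one_eq_two.ge hd0.symMin (symMin_mem_of_ne hd)⟩,
    symMax_inf_comp_swap_eq_iff.not.mpr hasymm, symMin_sup_comp_swap_eq_iff.not.mpr hasymm⟩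
end

section
/- Let X be a set and let d, m : X × X → [0,∞] be weight structures each satisfying axioms (0) and (Δ). Then ψ(d ⊔ m) = ψ(d) ⊔ ψ(m), where d ⊔ m is the pointwise supremum (i.e., (d ⊔ m)(x,y) = max(d(x,y), m(x,y))) and ψ(d) ⊔ ψ(m) is the supremum of the two topologies in the lattice of topologies on X ordered by inclusion of open sets (the coarsest topology refining both). -/
open scoped ENNReal

/-- `ψ(d)`: the topology generated by the balls `B_d(x,ε) = {y | d(x,y) < ε}` as a
subbasis. -/
def psi {X : Type*} (d : X × X → ℝ≥0∞) : TopologicalSpace X :=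
  TopologicalSpace.generateFrom
    {s : Set X | ∃ (x : X) (ε : ℝ≥0∞), 0 < ε ∧ s = {y : X | d (x, y) < ε}}

/-! In the inclusion order, `ψ(d) ⊔ ψ(m) ≤ ψ(d ⊔ m)` is an instance of monotonicity: around a point
`y` of `B_d(x,ε)`, axiom (Δ) for `d` fits a `d`-ball centred at `y`, which contains the ball of
`d ⊔ m` with the same centre and radius, and axiom (0) for `d ⊔ m` puts `y` in the latter. The
converse inequality holds for all weight structures, since a ball of `d ⊔ m` is the intersection of
the two balls with the same centre and radius. -/

section WeightStructure

open scoped Topology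

variable {X : Type*} {d e m : X × X → ℝ≥0∞} {x y : X} {ε : ℝ≥0∞}

/-- The ball `B_d(x,ε)` of a weight structure: the subbasic open sets of `ψ(d)`. The radius `ε = 0`
is allowed and gives the empty set. -/
def weightBall (d : X × X → ℝ≥0∞) (x : X) (ε : ℝ≥0∞) : Set X :=
  {y | d (x, y) < ε}

lemma mem_weightBall : y ∈ weightBall d x ε ↔ d (x, y) < ε :=
  Iff.rfl

lemma weightBall_zero (d : X × X → ℝ≥0∞) (x : X) : weightBall d x 0 = ∅ :=
  Set.eq_empty_of_forall_notMem fun _ hy ↦ not_lt_zero (mem_weightBall.1 hy)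

lemma weightBall_sup (d m : X × X → ℝ≥0∞) (x : X) (ε : ℝ≥0∞) :
    weightBall (d ⊔ m) x ε = weightBall d x ε ∩ weightBall m x ε :=
  Set.ext fun _ ↦ by simp only [Set.mem_inter_iff, mem_weightBall, Pi.sup_apply, sup_lt_iff]

lemma weightBall_subset_weightBall_of_le (hde : d ≤ e) (x : X) (ε : ℝ≥0∞) :
    weightBall e x ε ⊆ weightBall d x ε :=
  fun _ hy ↦ (hde _).trans_lt hy

lemma Ax0.mem_weightBall_self (hd : Ax0 d) (hε : 0 < ε) : x ∈ weightBall d x ε :=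
  (hd x).trans_lt hε

lemma Ax0.sup (hd : Ax0 d) (hm : Ax0 m) : Ax0 (d ⊔ m) :=
  fun x ↦ by rw [Pi.sup_apply, hd x, hm x, sup_idem]

lemma AxTri.weightBall_tsub_subset (hd : AxTri d) (x y : X) (ε : ℝ≥0∞) :
    weightBall d y (ε - d (x, y)) ⊆ weightBall d x ε :=
  fun z hz ↦ (hd x y z).trans_lt (lt_tsub_iff_left.1 hz)

lemma isOpen_psi_weightBall (d : X × X → ℝ≥0∞) (x : X) (ε : ℝ≥0∞) :
    IsOpen[psi d] (weightBall d x ε) := by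
  obtain rfl | hε := eq_zero_or_pos ε
  · rw [weightBall_zero]
    exact @isOpen_empty X (psi d)
  · exact .basic _ ⟨x, ε, hε, rfl⟩

lemma le_psi_iff {t : TopologicalSpace X} :
    t ≤ psi d ↔ ∀ x ε, IsOpen[t] (weightBall d x ε) := by
  refine ⟨fun h x ε ↦ h _ (isOpen_psi_weightBall d x ε), fun h ↦ le_generateFrom ?_⟩
  rintro _ ⟨x, ε, -, rfl⟩
  exact h x ε

lemma psi_le_psi_of_le (he : Ax0 e) (hd : AxTri d) (hde : d ≤ e) : psi e ≤ psi d := by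
  let _ : TopologicalSpace X := psi e
  refine le_psi_iff.2 fun x ε ↦ isOpen_iff_forall_mem_open.2 fun y hy ↦ ?_
  have hsub : weightBall e y (ε - d (x, y)) ⊆ weightBall d x ε :=
    (weightBall_subset_weightBall_of_le hde y _).trans (hd.weightBall_tsub_subset x y ε)
  exact ⟨_, hsub, isOpen_psi_weightBall e y _, he.mem_weightBall_self (tsub_pos_of_lt hy)⟩

lemma psi_inf_psi_le_psi_sup (d m : X × X → ℝ≥0∞) : psi d ⊓ psi m ≤ psi (d ⊔ m) := by
  let _ : TopologicalSpace X := psi d ⊓ psi m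
  refine le_psi_iff.2 fun x ε ↦ ?_
  have hd : IsOpen (weightBall d x ε) := le_psi_iff.1 inf_le_left x ε
  have hm : IsOpen (weightBall m x ε) := le_psi_iff.1 inf_le_right x ε
  rw [weightBall_sup]
  exact hd.inter hm

end WeightStructure

/-- For weight structures `d, m` satisfying (0) and (Δ),
`ψ(d ⊔ m) = ψ(d) ⊔ ψ(m)`, the supremum being taken in the lattice of topologies ordered
by inclusion of open sets (the coarsest topology refining both).  NB: Mathlib orders
`TopologicalSpace X` with the discrete topology as `⊥`, i.e. *reverse* to inclusion of
open-set families, so this supremum is Mathlib's `⊓`. -/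
theorem stmt7 (X : Type*) (d m : X × X → ℝ≥0∞)
    (h0d : Ax0 d) (hTd : AxTri d) (h0m : Ax0 m) (hTm : AxTri m) :
    psi (d ⊔ m) = psi d ⊓ psi m := by
  have h0 : Ax0 (d ⊔ m) := h0d.sup h0m
  have hd : psi (d ⊔ m) ≤ psi d := psi_le_psi_of_le h0 hTd le_sup_left
  have hm : psi (d ⊔ m) ≤ psi m := psi_le_psi_of_le h0 hTm le_sup_right
  exact le_antisymm (le_inf hd hm) (psi_inf_psi_le_psi_sup d m)
end

section
/- There exist a set X and weight structures d, m : X × X → [0,∞], each satisfying axioms (0), (s), (Σ) and (Δ) (i.e., extended metrics), such that ψ(d) = ψ(m), yet for the weight structure p defined as the greatest weight structure satisfying axioms (0) and (Δ) that lies below both d and m (equivalently, p(x,y) is the infimum over all finite paths x = y_0, …, y_n = y of Σ_{i<n} min(d(y_i,y_{i+1}), m(y_i,y_{i+1}))), the topology ψ(p) is strictly coarser than ψ(d). Consequently, the fibers of ψ over a topology are in general not closed under binary meets, and ψ does not preserve binary meets. -/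
open scoped ENNReal

/-- Axiom (Σ). -/
def AxSym {X : Type*} (d : X × X → ℝ≥0∞) : Prop := ∀ x y : X, d (x, y) = d (y, x)

/-- The greatest weight structure below `p` satisfying (0) and (Δ): the infimum over
finite paths of the sums of `p`-lengths of their segments. -/
noncomputable def pathInf {X : Type*} (p : X × X → ℝ≥0∞) : X × X → ℝ≥0∞ :=
  fun q =>
    ⨅ (n : ℕ) (_ : 1 ≤ n) (γ : Fin (n + 1) → X) (_ : γ 0 = q.1) (_ : γ (Fin.last n) = q.2),
      ∑ i : Fin n, p (γ i.castSucc, γ i.succ)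

/-!
Both metrics live on a point together with countably many chains `(n, 0), (n, 1), …`, and make that
point the only accumulation point. Along a chain the steps alternate between short and long; the
steps that are long for `d` are short for `m` and conversely. Being out of phase by one step changes
distances to the accumulation point by at most a factor two, so `d` and `m` induce the same
topology. A path that uses each metric only for its short steps reaches `(n, n)` from the
accumulation point at a cost that tends to zero with `n`, while its `d`-distance stays at least
`1 / 2`.
-/

open scoped NNReal Topology

section Psi

variable {X : Type*} {d m : X × X → ℝ≥0∞}

lemma Ax0.mono (hd : Ax0 d) (hmd : m ≤ d) : Ax0 m :=
  fun x => nonpos_iff_eq_zero.1 ((hmd _).trans_eq (hd x))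

lemma hasBasis_nhds_psi (h₀ : Ax0 d) (hΔ : AxTri d) (x : X) :
    (@nhds X (psi d) x).HasBasis (fun ε : ℝ≥0∞ => 0 < ε) fun ε => {y | d (x, y) < ε} := by
  suffices h : @nhds X (psi d) x = ⨅ (ε : ℝ≥0∞) (_ : 0 < ε), Filter.principal {y | d (x, y) < ε} by
    rw [h]
    refine Filter.hasBasis_biInf_principal' (fun ε hε δ hδ => ?_) ⟨1, one_pos⟩
    exact ⟨min ε δ, lt_min hε hδ, fun y hy => lt_of_lt_of_le hy (min_le_left ε δ),
      fun y hy => lt_of_lt_of_le hy (min_le_right ε δ)⟩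
  rw [psi, TopologicalSpace.nhds_generateFrom]
  apply le_antisymm
  · exact le_iInf₂ fun ε hε => iInf₂_le _ ⟨(h₀ x).trans_lt hε, x, ε, hε, rfl⟩
  · refine le_iInf₂ fun s hs => ?_
    obtain ⟨hx, z, ε, -, rfl⟩ := hs
    refine (iInf₂_le (ε - d (z, x)) (tsub_pos_of_lt hx)).trans (Filter.principal_mono.2 ?_)
    exact fun y hy => (hΔ z x y).trans_lt (lt_tsub_iff_left.1 hy)

lemma psi_le_psi_iff (hd₀ : Ax0 d) (hdΔ : AxTri d) (hm₀ : Ax0 m) (hmΔ : AxTri m) :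
    psi d ≤ psi m ↔ ∀ x, ∀ ε > 0, ∃ δ > 0, ∀ y, d (x, y) < δ → m (x, y) < ε := by
  rw [le_iff_nhds]
  exact forall_congr' fun x =>
    (hasBasis_nhds_psi hd₀ hdΔ x).le_basis_iff (hasBasis_nhds_psi hm₀ hmΔ x)

end Psi

section PathInf

variable {X : Type*} {q r : X × X → ℝ≥0∞}

lemma pathInf_le (q : X × X → ℝ≥0∞) : pathInf q ≤ q := by
  rintro ⟨x, y⟩
  exact iInf₂_le_of_le 1 le_rfl (iInf_le_of_le ![x, y] (iInf₂_le_of_le rfl rfl (by simp)))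

lemma ax0_pathInf (hq : Ax0 q) : Ax0 (pathInf q) :=
  hq.mono (pathInf_le q)

lemma pathInf_le_pathInf_add (q : X × X → ℝ≥0∞) (x y z : X) :
    pathInf q (x, z) ≤ pathInf q (x, y) + q (y, z) := by
  rw [← tsub_le_iff_right]
  refine le_iInf₂ fun n _ => le_iInf fun γ => le_iInf₂ fun h_first h_last => ?_
  rw [tsub_le_iff_right]
  refine iInf₂_le_of_le (n + 1) n.succ_pos
    (iInf_le_of_le (Fin.snoc γ z : Fin (n + 2) → X) (iInf₂_le_of_le ?_ ?_ ?_))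
  · rwa [← Fin.castSucc_zero, Fin.snoc_castSucc]
  · exact Fin.snoc_last (α := fun _ => X) z γ
  · simp only [Fin.sum_univ_castSucc, ← Fin.castSucc_succ, Fin.snoc_castSucc, Fin.succ_last,
      Fin.snoc_last, h_last, le_refl]

lemma pathInf_le_pathInf_add_sum (q : X × X → ℝ≥0∞) (x : X) (γ : ℕ → X) (n : ℕ) :
    pathInf q (x, γ n) ≤ pathInf q (x, γ 0) + ∑ i ∈ Finset.range n, q (γ i, γ (i + 1)) := by
  induction n with
  | zero => simp
  | succ n ih =>
    rw [Finset.sum_range_succ, ← add_assoc]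
    exact (pathInf_le_pathInf_add q x (γ n) (γ (n + 1))).trans (add_le_add_left ih _)

lemma AxTri.le_sum (hr : AxTri r) {n : ℕ} (hn : 1 ≤ n) (γ : Fin (n + 1) → X) :
    r (γ 0, γ (Fin.last n)) ≤ ∑ i : Fin n, r (γ i.castSucc, γ i.succ) := by
  induction n, hn using Nat.le_induction with
  | base => simp
  | succ n _ ih =>
    rw [Fin.sum_univ_castSucc]
    exact (hr _ (γ (Fin.last n).castSucc) _).trans
      (add_le_add_left (ih fun i => γ i.castSucc) _)

lemma AxTri.le_pathInf (hr : AxTri r) (hrq : r ≤ q) : r ≤ pathInf q := by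
  rintro ⟨x, y⟩
  refine le_iInf₂ fun n hn => le_iInf fun γ => le_iInf₂ ?_
  rintro rfl rfl
  exact (hr.le_sum hn γ).trans (Finset.sum_le_sum fun i _ => hrq _)

lemma axTri_pathInf (q : X × X → ℝ≥0∞) : AxTri (pathInf q) := by
  intro x y z
  -- Appending a segment shows that `(a, b) ↦ pathInf q (x, b) - pathInf q (x, a)` lies below `q`,
  -- hence below `pathInf q` by maximality.
  have h_tri : AxTri fun a : X × X => pathInf q (x, a.2) - pathInf q (x, a.1) :=
    fun a b c => (tsub_le_tsub_add_tsub (b := pathInf q (x, b))).trans_eq (add_comm _ _)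
  exact tsub_le_iff_left.1
    (h_tri.le_pathInf (fun a => tsub_le_iff_left.2 (pathInf_le_pathInf_add q x a.1 a.2)) (y, z))

lemma psi_le_psi_pathInf {d : X × X → ℝ≥0∞} (h₀ : Ax0 d) (hΔ : AxTri d) (hqd : q ≤ d) :
    psi d ≤ psi (pathInf q) := by
  refine (psi_le_psi_iff h₀ hΔ (ax0_pathInf (h₀.mono hqd)) (axTri_pathInf q)).2 fun x ε hε => ?_
  exact ⟨ε, hε, fun y hy => ((pathInf_le q _).trans (hqd _)).trans_lt hy⟩

end PathInf

section SpikeDist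

variable {X E : Type*} [PseudoEMetricSpace E]

open Classical in
/-- The distance between the tips of spikes of length `w x` attached at the points `f x`. The
spikes make every `x` with `w x ≠ 0` an isolated point without affecting the triangle inequality,
whether or not `f` is injective. -/
noncomputable def spikeDist (f : X → E) (w : X → ℝ≥0∞) : X × X → ℝ≥0∞ :=
  fun q => edist (f q.1) (f q.2) + if q.1 = q.2 then 0 else w q.1 + w q.2

variable {f g : X → E} {w : X → ℝ≥0∞} {x y : X}

lemma spikeDist_of_ne (h : x ≠ y) :
    spikeDist f w (x, y) = edist (f x) (f y) + (w x + w y) := by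
  simp only [spikeDist, if_neg h]

lemma ax0_spikeDist (f : X → E) (w : X → ℝ≥0∞) : Ax0 (spikeDist f w) := by
  simp only [Ax0, spikeDist, edist_self, if_true, add_zero, implies_true]

lemma axSym_spikeDist (f : X → E) (w : X → ℝ≥0∞) : AxSym (spikeDist f w) := by
  intro x y
  rcases eq_or_ne x y with rfl | hxy
  · rfl
  · rw [spikeDist_of_ne hxy, spikeDist_of_ne hxy.symm, edist_comm, add_comm (w x)]

lemma axTri_spikeDist (f : X → E) (w : X → ℝ≥0∞) : AxTri (spikeDist f w) := by
  intro x y z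
  rcases eq_or_ne x y with rfl | hxy
  · simp [ax0_spikeDist f w x]
  rcases eq_or_ne y z with rfl | hyz
  · simp [ax0_spikeDist f w y]
  rcases eq_or_ne x z with rfl | hxz
  · simp [ax0_spikeDist f w x]
  rw [spikeDist_of_ne hxy, spikeDist_of_ne hyz, spikeDist_of_ne hxz, add_add_add_comm]
  exact add_le_add (edist_triangle _ _ _) (add_le_add le_self_add le_add_self)

lemma eq_of_spikeDist_lt (h : spikeDist f w (x, y) < w x) : x = y := by
  contrapose! h
  rw [spikeDist_of_ne h]
  exact le_add_left le_self_add

lemma axSep_spikeDist (hw : {x | w x = 0}.Subsingleton) : AxSep (spikeDist f w) := by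
  intro x y hxy _
  by_contra hne
  simp only [spikeDist_of_ne hne, add_eq_zero] at hxy
  exact hne (hw hxy.2.1 hxy.2.2)

lemma spikeDist_le_mul {K : ℝ≥0∞} (h : edist (g x) (g y) ≤ K * edist (f x) (f y)) :
    spikeDist g w (x, y) ≤ (K + 1) * spikeDist f w (x, y) := by
  simp only [spikeDist, add_mul, mul_add, one_mul]
  exact add_le_add (h.trans le_self_add) le_add_self

lemma psi_spikeDist_le_psi_spikeDist {K : ℝ≥0}
    (h : ∀ x, w x = 0 → ∀ y, edist (g x) (g y) ≤ K * edist (f x) (f y)) :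
    psi (spikeDist f w) ≤ psi (spikeDist g w) := by
  refine (psi_le_psi_iff (ax0_spikeDist f w) (axTri_spikeDist f w) (ax0_spikeDist g w)
    (axTri_spikeDist g w)).2 fun x ε hε => ?_
  rcases eq_or_ne (w x) 0 with hx | hx
  · refine ⟨ε / (K + 1), ENNReal.div_pos hε.ne' (by finiteness), fun y hy => ?_⟩
    exact (spikeDist_le_mul (h x hx y)).trans_lt (ENNReal.mul_lt_of_lt_div' hy)
  · refine ⟨w x, pos_iff_ne_zero.2 hx, fun y hy => ?_⟩
    rw [← eq_of_spikeDist_lt hy, ax0_spikeDist g w x]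
    exact hε

end SpikeDist

section ChainDist

/-- The positions of an accumulation point `none` and of chains `some (n, 0), some (n, 1), …`,
where the `n`-th chain has scale `1 / (n + 1)` and `h` determines which of its steps are long. -/
noncomputable def chainPos (h : ℕ → ℕ) : Option (ℕ × ℕ) → ℝ≥0
  | none => 0
  | some (n, j) => h j / (n + 1)

/-- The spike lengths on the chains: small enough that `n` steps of that length along the `n`-th
chain are negligible in total. -/
noncomputable def chainSpike : Option (ℕ × ℕ) → ℝ≥0∞
  | none => 0
  | some (n, _) => (1 / (n + 1) ^ 2 : ℝ≥0)

/-- The metric on the accumulation point and the chains for the step pattern `h`. -/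
noncomputable def chainDist (h : ℕ → ℕ) : Option (ℕ × ℕ) × Option (ℕ × ℕ) → ℝ≥0∞ :=
  spikeDist (chainPos h) chainSpike

lemma subsingleton_chainSpike_eq_zero : {x | chainSpike x = 0}.Subsingleton := by
  rintro (_ | x) hx (_ | y) hy
  · rfl
  all_goals simp [chainSpike] at hx hy

lemma chainDist_axioms (h : ℕ → ℕ) :
    Ax0 (chainDist h) ∧ AxSep (chainDist h) ∧ AxSym (chainDist h) ∧ AxTri (chainDist h) :=
  ⟨ax0_spikeDist _ _, axSep_spikeDist subsingleton_chainSpike_eq_zero, axSym_spikeDist _ _,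
    axTri_spikeDist _ _⟩

lemma edist_chainPos_none (h : ℕ → ℕ) (n j : ℕ) :
    edist (chainPos h none) (chainPos h (some (n, j))) = (h j / (n + 1) : ℝ≥0) := by
  rw [edist_nndist, chainPos, chainPos, NNReal.nndist_zero_eq_val]

lemma psi_chainDist_le_psi_chainDist {h k : ℕ → ℕ} {K : ℕ} (hkh : ∀ j, k j ≤ K * h j) :
    psi (chainDist h) ≤ psi (chainDist k) := by
  refine psi_spikeDist_le_psi_spikeDist (K := K) fun x hx y => ?_
  obtain rfl : x = none := subsingleton_chainSpike_eq_zero hx rfl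
  rcases y with _ | ⟨n, j⟩
  · simp
  · rw [edist_chainPos_none, edist_chainPos_none, ← ENNReal.coe_mul, ENNReal.coe_le_coe,
      ← mul_div_assoc]
    gcongr
    exact_mod_cast hkh j

lemma chainDist_none (h : ℕ → ℕ) (n j : ℕ) :
    chainDist h (none, some (n, j)) = (h j / (n + 1) + 1 / (n + 1) ^ 2 : ℝ≥0) := by
  rw [chainDist, spikeDist_of_ne (Option.some_ne_none _).symm, edist_chainPos_none, chainSpike,
    chainSpike, zero_add, ENNReal.coe_add]

lemma chainDist_succ {h : ℕ → ℕ} {j : ℕ} (hj : h (j + 1) = h j) (n : ℕ) :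
    chainDist h (some (n, j), some (n, j + 1)) = (2 / (n + 1) ^ 2 : ℝ≥0) := by
  rw [chainDist, spikeDist_of_ne (by simp), chainPos, chainPos, hj, edist_self, zero_add,
    chainSpike, chainSpike, ← ENNReal.coe_add, ← add_div, one_add_one_eq_two]

lemma pathInf_chainDist_le {h k : ℕ → ℕ} (hhk : ∀ j, h (j + 1) = h j ∨ k (j + 1) = k j) (n : ℕ) :
    pathInf (chainDist h ⊓ chainDist k) (none, some (n, n)) ≤ ((h 0 + 2) / (n + 1) : ℝ≥0) := by
  have h_step : ∀ j, (chainDist h ⊓ chainDist k) (some (n, j), some (n, j + 1)) ≤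
      (2 / (n + 1) ^ 2 : ℝ≥0) := fun j => (hhk j).elim
    (fun hj => inf_le_left.trans_eq (chainDist_succ hj n))
    (fun hj => inf_le_right.trans_eq (chainDist_succ hj n))
  have h_total : (h 0 / (n + 1) + 1 / (n + 1) ^ 2 + n * (2 / (n + 1) ^ 2) : ℝ≥0) ≤
      (h 0 + 2) / (n + 1) :=
    calc (h 0 / (n + 1) + 1 / (n + 1) ^ 2 + n * (2 / (n + 1) ^ 2) : ℝ≥0)
        = h 0 / (n + 1) + (2 * n + 1) / (n + 1) ^ 2 := by ring
      _ ≤ h 0 / (n + 1) + 2 * (n + 1) / (n + 1) ^ 2 := by gcongr; linarith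
      _ = (h 0 + 2) / (n + 1) := by field_simp
  calc pathInf (chainDist h ⊓ chainDist k) (none, some (n, n))
      ≤ pathInf (chainDist h ⊓ chainDist k) (none, some (n, 0)) + ∑ j ∈ Finset.range n,
          (chainDist h ⊓ chainDist k) (some (n, j), some (n, j + 1)) :=
        pathInf_le_pathInf_add_sum _ none (fun j => some (n, j)) n
    _ ≤ chainDist h (none, some (n, 0)) +
          ∑ _j ∈ Finset.range n, ((2 / (n + 1) ^ 2 : ℝ≥0) : ℝ≥0∞) :=
        add_le_add ((pathInf_le _ _).trans inf_le_left) (Finset.sum_le_sum fun j _ => h_step j)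
    _ ≤ ((h 0 + 2) / (n + 1) : ℝ≥0) := by
        rw [chainDist_none, Finset.sum_const, Finset.card_range, nsmul_eq_mul]
        exact_mod_cast h_total

lemma exists_pathInf_chainDist_lt {h k : ℕ → ℕ} (hhk : ∀ j, h (j + 1) = h j ∨ k (j + 1) = k j)
    {ε : ℝ≥0∞} (hε : 0 < ε) :
    ∃ n, pathInf (chainDist h ⊓ chainDist k) (none, some (n, n)) < ε := by
  have h_lim : Filter.Tendsto (fun n : ℕ => (h 0 + 2 : ℝ≥0) / (n + 1)) Filter.atTop (𝓝 0) := by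
    simpa [div_eq_mul_inv] using
      (tendsto_one_div_add_atTop_nhds_zero_nat (𝕜 := ℝ≥0)).const_mul (h 0 + 2 : ℝ≥0)
  obtain ⟨n, hn⟩ := ((ENNReal.tendsto_coe.2 h_lim).eventually_lt_const hε).exists
  exact ⟨n, (pathInf_chainDist_le hhk n).trans_lt hn⟩

lemma half_le_chainDist {h : ℕ → ℕ} {n : ℕ} (hn : n + 1 ≤ 2 * h n) :
    1 / 2 ≤ chainDist h (none, some (n, n)) := by
  have hn' : (1 / 2 : ℝ≥0) ≤ h n / (n + 1) := by
    rw [div_le_div_iff₀ two_pos (by positivity), one_mul, mul_comm]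
    exact_mod_cast hn
  rw [chainDist_none]
  calc (1 / 2 : ℝ≥0∞) = (1 / 2 : ℝ≥0) := by simp
    _ ≤ _ := ENNReal.coe_le_coe.2 (hn'.trans le_self_add)

lemma psi_chainDist_lt_psi_pathInf {h k : ℕ → ℕ} (hh : ∀ n, n + 1 ≤ 2 * h n)
    (hhk : ∀ j, h (j + 1) = h j ∨ k (j + 1) = k j) :
    psi (chainDist h) < psi (pathInf (chainDist h ⊓ chainDist k)) := by
  obtain ⟨h₀, -, -, hΔ⟩ := chainDist_axioms h
  have hp₀ : Ax0 (pathInf (chainDist h ⊓ chainDist k)) :=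
    ax0_pathInf (h₀.mono inf_le_left)
  refine lt_of_le_not_ge (psi_le_psi_pathInf h₀ hΔ inf_le_left) fun hle => ?_
  obtain ⟨δ, hδ, hball⟩ :=
    (psi_le_psi_iff hp₀ (axTri_pathInf _) h₀ hΔ).1 hle none (1 / 2) (by simp)
  obtain ⟨n, hn⟩ := exists_pathInf_chainDist_lt hhk hδ
  exact (half_le_chainDist (hh n)).not_gt (hball _ hn)

end ChainDist

/-- There are a set `X` and extended metrics `d, m` on it with
`ψ(d) = ψ(m)`, such that for `p = pathInf (d ⊓ m)` (the greatest weight structure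
satisfying (0) and (Δ) below both `d` and `m`), the topology `ψ(p)` is *strictly
coarser* than `ψ(d)`.  NB: Mathlib orders topologies with discrete = `⊥` (reverse to
inclusion of open sets), so "`ψ(p)` strictly coarser than `ψ(d)`" reads `ψ(d) < ψ(p)`. -/
theorem stmt9 :
    ∃ (X : Type) (d m : X × X → ℝ≥0∞),
      (Ax0 d ∧ AxSep d ∧ AxSym d ∧ AxTri d) ∧
      (Ax0 m ∧ AxSep m ∧ AxSym m ∧ AxTri m) ∧
      psi d = psi m ∧
      psi d < psi (pathInf (d ⊓ m)) := by
  -- The summand `1` keeps the two step patterns within a factor two of each other at small `j`.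
  refine ⟨Option (ℕ × ℕ), chainDist fun j => j / 2 + 1, chainDist fun j => (j + 1) / 2 + 1,
    chainDist_axioms _, chainDist_axioms _, ?_, ?_⟩
  · exact le_antisymm (psi_chainDist_le_psi_chainDist (K := 2) fun j => by omega)
      (psi_chainDist_le_psi_chainDist (K := 2) fun j => by omega)
  · exact psi_chainDist_lt_psi_pathInf (fun n => by omega) fun j => by omega
end

section
/- There exist a countable set X and weight structures d, m : X × X → [0,∞], both satisfying axioms (0) and (Σ), with d ≤ m pointwise and d ≠ m, such that the topologies ψ(d) and ψ(m) are incomparable: neither ψ(d) ⊆ ψ(m) nor ψ(m) ⊆ ψ(d). Consequently, on weight structures not assumed to satisfy the triangle inequality, the assignment d ↦ ψ(d) is not order-preserving. -/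
open scoped ENNReal

/-!
In `ψ(d)` a point `y` lies in every open set containing `x` exactly when `y` is at least as close as
`x` to every point. A comparison of `ψ(d)` with `ψ(m)` would therefore transfer this relation from
one weight structure to the other. Let `d` and `m` vanish on equal or adjacent points and be `1`
elsewhere, for the star centred at `b` and for its single edge `ab` respectively, and let `c` be a
third point. For `d` the centre `b` is close to every point, hence at least as close as `c`, but
`m (c, b) = 1`. For `m` the points `a` and `b` are equally close to every point, but
`d (c, a) = 1` and `d (c, b) = 0`.
-/

open SimpleGraph

section Specialization

variable {X : Type*}

theorem specializes_generateFrom_iff {g : Set (Set X)} {x y : X} :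
    @Specializes X (.generateFrom g) x y ↔ ∀ s ∈ g, y ∈ s → x ∈ s := by
  let := TopologicalSpace.generateFrom g
  refine ⟨fun h s hs ↦ h.mem_open (.basic s hs), fun h ↦ ?_⟩
  rw [Specializes, TopologicalSpace.nhds_generateFrom (a := y)]
  simp only [le_iInf_iff, Filter.le_principal_iff]
  exact fun s ⟨hys, hs⟩ ↦ IsOpen.mem_nhds (.basic s hs) (h s hs hys)

theorem specializes_psi_iff {d : X × X → ℝ≥0∞} {a b : X} :
    @Specializes X (psi d) b a ↔ ∀ z, d (z, b) ≤ d (z, a) := by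
  refine specializes_generateFrom_iff.trans ⟨fun h z ↦ ?_, ?_⟩
  · by_contra! hlt
    have hb : d (z, b) < d (z, b) := h _ ⟨z, d (z, b), pos_of_gt hlt, rfl⟩ hlt
    exact hb.false
  · rintro h _ ⟨z, ε, -, rfl⟩ ha
    exact (h z).trans_lt ha

theorem forall_le_of_psi_le_psi {d m : X × X → ℝ≥0∞} (hdm : psi d ≤ psi m) {a b : X}
    (h : ∀ z, d (z, b) ≤ d (z, a)) (z : X) : m (z, b) ≤ m (z, a) :=
  have hm : @Specializes X (psi m) b a :=
    @Specializes.map X X (psi d) (psi m) b a id (specializes_psi_iff.2 h) (continuous_id_of_le hdm)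
  specializes_psi_iff.1 hm z

end Specialization

section GraphWeight

variable {V : Type*} {G H : SimpleGraph V}

open Classical in
/-- The weight structure of a graph, with value `0` on pairs of equal or adjacent vertices and `1`
on all others. It turns graphs into weight structures satisfying (0) and (Σ), in general without the
triangle inequality. -/
noncomputable def graphWeight (G : SimpleGraph V) (p : V × V) : ℝ≥0∞ :=
  if p.1 = p.2 ∨ G.Adj p.1 p.2 then 0 else 1

theorem graphWeight_eq_zero_iff {x y : V} : graphWeight G (x, y) = 0 ↔ x = y ∨ G.Adj x y := by
  simp [graphWeight, or_iff_not_imp_left]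

theorem graphWeight_le_graphWeight_iff {p q : V × V} :
    graphWeight G p ≤ graphWeight H q ↔
      (q.1 = q.2 ∨ H.Adj q.1 q.2 → p.1 = p.2 ∨ G.Adj p.1 p.2) := by
  unfold graphWeight
  split_ifs <;> simp_all

theorem ax0_graphWeight (G : SimpleGraph V) : Ax0 (graphWeight G) :=
  fun _ ↦ graphWeight_eq_zero_iff.2 (.inl rfl)

theorem axSym_graphWeight (G : SimpleGraph V) : AxSym (graphWeight G) :=
  have hle (x y : V) : graphWeight G (x, y) ≤ graphWeight G (y, x) :=
    graphWeight_le_graphWeight_iff.2 (Or.imp Eq.symm Adj.symm)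
  fun x y ↦ (hle x y).antisymm (hle y x)

theorem graphWeight_antitone : Antitone (graphWeight (V := V)) :=
  fun _ _ hGH _ ↦ graphWeight_le_graphWeight_iff.2 (Or.imp_right (hGH ·))

theorem not_psi_graphWeight_le_of_isUniversal {b c : V} (hG : G.IsUniversal b) (hne : c ≠ b)
    (hadj : ¬ H.Adj c b) : ¬ psi (graphWeight G) ≤ psi (graphWeight H) := by
  intro hle
  have hcenter (z : V) : graphWeight G (z, b) = 0 :=
    graphWeight_eq_zero_iff.2 (or_iff_not_imp_left.2 fun hzb ↦ (hG (Ne.symm hzb)).symm)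
  have hcb : graphWeight H (c, b) ≤ graphWeight H (c, c) :=
    forall_le_of_psi_le_psi hle (fun z ↦ (hcenter z).trans_le zero_le) c
  rw [ax0_graphWeight H c, nonpos_iff_eq_zero, graphWeight_eq_zero_iff] at hcb
  exact hcb.elim hne hadj

theorem graphWeight_edge_left_le_right (a b z : V) :
    graphWeight (edge a b) (z, a) ≤ graphWeight (edge a b) (z, b) := by
  simp only [graphWeight_le_graphWeight_iff, edge_adj]
  grind

theorem not_psi_graphWeight_edge_le_of_adj {a b c : V} (hcb : G.Adj c b) (hne : c ≠ a)
    (hadj : ¬ G.Adj c a) : ¬ psi (graphWeight (edge a b)) ≤ psi (graphWeight G) := by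
  intro hle
  have hca : graphWeight G (c, a) ≤ graphWeight G (c, b) :=
    forall_le_of_psi_le_psi hle (graphWeight_edge_left_le_right a b) c
  rw [graphWeight_eq_zero_iff.2 (.inr hcb), nonpos_iff_eq_zero, graphWeight_eq_zero_iff] at hca
  exact hca.elim hne hadj

end GraphWeight

theorem stmt10_general {X : Type*} (hX : 3 ≤ ENat.card X) :
    ∃ d m : X × X → ℝ≥0∞,
      (Ax0 d ∧ AxSym d) ∧ (Ax0 m ∧ AxSym m) ∧
      d ≤ m ∧ d ≠ m ∧
      ¬ psi d ≤ psi m ∧ ¬ psi m ≤ psi d := by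
  have : Nontrivial X := (ENat.one_lt_card_iff_nontrivial X).1 (lt_of_lt_of_le (by norm_num) hX)
  obtain ⟨a, b, hab⟩ := exists_pair_ne X
  obtain ⟨c, hca, hcb⟩ := ENat.exists_ne_ne_of_three_le hX a b
  have hle : edge a b ≤ starGraph b := (edge_le_iff _).2 (.inr (starGraph_center_adj' hab.symm))
  have hstar : ¬ psi (graphWeight (starGraph b)) ≤ psi (graphWeight (edge a b)) :=
    not_psi_graphWeight_le_of_isUniversal isUniversal_starGraph_self hcb
      (by simp [edge_adj, hca, hcb])
  have hedge : ¬ psi (graphWeight (edge a b)) ≤ psi (graphWeight (starGraph b)) :=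
    not_psi_graphWeight_edge_le_of_adj (starGraph_center_adj' hcb.symm) hca
      (by simp [starGraph_adj, hab, hcb])
  exact ⟨graphWeight (starGraph b), graphWeight (edge a b),
    ⟨ax0_graphWeight _, axSym_graphWeight _⟩, ⟨ax0_graphWeight _, axSym_graphWeight _⟩,
    graphWeight_antitone hle, fun h ↦ hstar (h ▸ le_rfl), hstar, hedge⟩

/-- There are a countable set `X` and weight structures `d ≤ m`, `d ≠ m`,
both satisfying (0) and (Σ), whose topologies `ψ(d)` and `ψ(m)` are incomparable; hence
`ψ` is not order-preserving on weight structures without the triangle inequality. -/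
theorem stmt10 :
    ∃ (X : Type) (_ : Countable X) (d m : X × X → ℝ≥0∞),
      (Ax0 d ∧ AxSym d) ∧ (Ax0 m ∧ AxSym m) ∧
      d ≤ m ∧ d ≠ m ∧
      ¬ psi d ≤ psi m ∧ ¬ psi m ≤ psi d := by
  exact ⟨Fin 3, inferInstance, stmt10_general (by simp)⟩
end

section
/- There exist a countable set X and weight structures d, m : X × X → [0,∞], both satisfying axioms (0), (s) and (Σ), such that ψ(d) = ψ(m) but ψ(d ⊓ m) ≠ ψ(d), where d ⊓ m is the pointwise infimum, (d ⊓ m)(x,y) = min(d(x,y), m(x,y)). Consequently, for weight structures not satisfying the triangle inequality, the fibers of ψ are in general not closed under binary pointwise meets. -/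
open scoped ENNReal

/-!
On `ℚ≥0` let `d₀ (x, y) = max x y` for `x ≠ y` and `d₀ (x, x) = 0`. By the triangle inequality every
neighbourhood of `0` contains a ball about `0`, so `0` is not isolated. Split the off-diagonal pairs
into those containing `0` and the others, and raise `d₀` to `∞` on one of the two classes. If the
pairs containing `0` are raised, the ball of radius `∞` about `0` is `{0}`. If the others are
raised, the balls of radius `∞` about `1` and `2` are `{0, 1}` and `{0, 2}`, which meet in `{0}`.
So both raised weights generate the discrete topology, but their pointwise infimum is `d₀`.
-/

open Set
open scoped NNReal Topology

section Balls

variable {X : Type*} {d : X × X → ℝ≥0∞}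

lemma isOpen_psi_ball (d : X × X → ℝ≥0∞) (x : X) {ε : ℝ≥0∞} (hε : 0 < ε) :
    IsOpen[psi d] {y | d (x, y) < ε} :=
  TopologicalSpace.isOpen_generateFrom_of_mem ⟨x, ε, hε, rfl⟩

lemma comap_le_nhds_psi {o : X} (htri : ∀ x y, d (x, y) ≤ d (x, o) + d (o, y)) :
    Filter.comap (fun y => d (o, y)) (𝓝 0) ≤ @nhds X (psi d) o := by
  refine le_of_le_of_eq (le_iInf₂ ?_) TopologicalSpace.nhds_generateFrom.symm
  rintro _ ⟨hox, x, ε, -, rfl⟩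
  refine Filter.le_principal_iff.2 ((ENNReal.nhds_zero_basis.comap _).mem_iff.2
    ⟨ε - d (x, o), tsub_pos_of_lt hox, ?_⟩)
  exact fun y hy => (htri x y).trans_lt (lt_tsub_iff_left.1 hy)

lemma psi_ne_bot {o : X} (htri : ∀ x y, d (x, y) ≤ d (x, o) + d (o, y))
    (hsmall : ∀ ε > 0, ∃ x ≠ o, d (o, x) < ε) : psi d ≠ ⊥ := by
  intro hbot
  have hmem : {o} ∈ @nhds X (psi d) o := by
    rw [hbot, @nhds_discrete X ⊥ (discreteTopology_bot X)]
    exact mem_singleton o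
  obtain ⟨ε, hε, hball⟩ :=
    (ENNReal.nhds_zero_basis.comap _).mem_iff.1 (comap_le_nhds_psi htri hmem)
  obtain ⟨x, hxo, hx⟩ := hsmall ε hε
  exact hxo (hball hx)

end Balls

/-- The weight structure that is `0` on the diagonal, `max (w x) (w y)` on the other pairs of `S`
and `∞` elsewhere. For `S = univ` it is the ultrametric given by the size function `w`; a smaller
`S` distorts it. -/
noncomputable def maxWeight {X : Type*} (w : X → ℝ≥0) (S : Set (X × X)) (p : X × X) : ℝ≥0∞ :=
  open scoped Classical in
  if p.1 = p.2 then 0 else if p ∈ S then max (w p.1 : ℝ≥0∞) (w p.2) else ∞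

/-- The pairs having `o` as one of their entries. -/
def pairsThrough {X : Type*} (o : X) : Set (X × X) := {p | p.1 = o ∨ p.2 = o}

section MaxWeight

variable {X : Type*} {w : X → ℝ≥0} {S : Set (X × X)} {o x y : X}

lemma ax0_maxWeight : Ax0 (maxWeight w S) := fun x => by simp [maxWeight]

lemma axSym_maxWeight (hS : ∀ x y, (x, y) ∈ S ↔ (y, x) ∈ S) : AxSym (maxWeight w S) := by
  intro x y
  rcases eq_or_ne x y with rfl | h
  · rfl
  · simp only [maxWeight, if_neg h, if_neg h.symm, max_comm (w x : ℝ≥0∞)]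
    congr 1
    exact propext (hS x y)

lemma max_le_maxWeight (h : x ≠ y) : max (w x : ℝ≥0∞) (w y) ≤ maxWeight w S (x, y) := by
  simp only [maxWeight, if_neg h]
  split_ifs
  exacts [le_rfl, le_top]

lemma axSep_maxWeight (hw : ∀ x, w x = 0 → x = o) : AxSep (maxWeight w S) := by
  intro x y hxy _
  by_contra hne
  have hmax : max (w x : ℝ≥0∞) (w y) ≤ 0 := hxy ▸ max_le_maxWeight hne
  obtain ⟨hx, hy⟩ : w x = 0 ∧ w y = 0 := by simpa using hmax
  exact hne ((hw x hx).trans (hw y hy).symm)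

lemma maxWeight_inf_maxWeight (w : X → ℝ≥0) (S T : Set (X × X)) :
    maxWeight w S ⊓ maxWeight w T = maxWeight w (S ∪ T) := by
  ext p
  by_cases h : p.1 = p.2 <;> by_cases hS : p ∈ S <;> by_cases hT : p ∈ T <;>
    simp [maxWeight, h, hS, hT]

lemma maxWeight_lt_top_iff : maxWeight w S (x, y) < ∞ ↔ x = y ∨ (x, y) ∈ S := by
  by_cases h : x = y <;> by_cases hS : (x, y) ∈ S <;> simp [maxWeight, h, hS]

lemma isOpen_psi_maxWeight_ball_top (w : X → ℝ≥0) (S : Set (X × X)) (x : X) :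
    IsOpen[psi (maxWeight w S)] {y | x = y ∨ (x, y) ∈ S} := by
  simpa only [maxWeight_lt_top_iff] using isOpen_psi_ball (maxWeight w S) x ENNReal.zero_lt_top

lemma isOpen_psi_maxWeight_singleton (hx : w x ≠ 0) : IsOpen[psi (maxWeight w S)] {x} := by
  have hball : {y | maxWeight w S (x, y) < w x} = {x} := by
    refine Subset.antisymm (fun y hy => ?_) ?_
    · by_contra hne
      exact hy.not_ge ((le_max_left _ _).trans (max_le_maxWeight (Ne.symm hne)))
    · simpa [ax0_maxWeight x] using pos_iff_ne_zero.2 hx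
  rw [← hball]
  exact isOpen_psi_ball _ x (by simpa using pos_iff_ne_zero.2 hx)

lemma psi_maxWeight_eq_bot (hw : ∀ x, w x = 0 → x = o) (ho : IsOpen[psi (maxWeight w S)] {o}) :
    psi (maxWeight w S) = ⊥ := by
  refine eq_bot_of_singletons_open fun x => ?_
  by_cases hx : w x = 0
  · exact hw x hx ▸ ho
  · exact isOpen_psi_maxWeight_singleton hx

lemma psi_maxWeight_pairsThrough_eq_bot {a b : X} (hw : ∀ x, w x = 0 → x = o)
    (ha : a ≠ o) (hb : b ≠ o) (hab : a ≠ b) : psi (maxWeight w (pairsThrough o)) = ⊥ := by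
  refine psi_maxWeight_eq_bot hw ?_
  have hinter : {y | a = y ∨ (a, y) ∈ pairsThrough o} ∩ {y | b = y ∨ (b, y) ∈ pairsThrough o} =
      {o} := by
    ext y
    simp only [pairsThrough, mem_inter_iff, mem_ofPred_eq, mem_singleton_iff]
    grind
  rw [← hinter]
  exact (psi _).isOpen_inter _ _ (isOpen_psi_maxWeight_ball_top w _ a)
    (isOpen_psi_maxWeight_ball_top w _ b)

lemma psi_maxWeight_compl_pairsThrough_eq_bot (hw : ∀ x, w x = 0 → x = o) :
    psi (maxWeight w (pairsThrough o)ᶜ) = ⊥ := by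
  refine psi_maxWeight_eq_bot hw ?_
  simpa [pairsThrough, Set.ext_iff, eq_comm] using
    isOpen_psi_maxWeight_ball_top w (pairsThrough o)ᶜ o

lemma maxWeight_univ_triangle (w : X → ℝ≥0) (x y z : X) :
    maxWeight w univ (x, z) ≤ maxWeight w univ (x, y) + maxWeight w univ (y, z) := by
  rcases eq_or_ne x y with rfl | hxy
  · simp [ax0_maxWeight x]
  rcases eq_or_ne y z with rfl | hyz
  · simp [ax0_maxWeight y]
  have hx := (le_max_left _ _).trans (max_le_maxWeight (w := w) (S := univ) hxy)
  have hz := (le_max_right _ _).trans (max_le_maxWeight (w := w) (S := univ) hyz)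
  calc maxWeight w univ (x, z) ≤ max (w x : ℝ≥0∞) (w z) := by
        simp only [maxWeight, mem_univ, if_true]
        split_ifs
        exacts [zero_le, le_rfl]
    _ ≤ maxWeight w univ (x, y) + maxWeight w univ (y, z) :=
        max_le (hx.trans le_self_add) (hz.trans le_add_self)

lemma maxWeight_univ_left (ho : w o = 0) (x : X) : maxWeight w univ (o, x) = w x := by
  rcases eq_or_ne o x with rfl | h
  · simp [ax0_maxWeight o, ho]
  · simp [maxWeight, h, ho]

lemma psi_maxWeight_univ_ne_bot (ho : w o = 0) (hsmall : ∀ ε > 0, ∃ x ≠ o, w x < ε) :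
    psi (maxWeight w univ) ≠ ⊥ := by
  refine psi_ne_bot (fun x => maxWeight_univ_triangle w x o) fun ε hε => ?_
  obtain ⟨δ, hδ, hδε⟩ := ENNReal.lt_iff_exists_nnreal_btwn.1 hε
  obtain ⟨x, hxo, hx⟩ := hsmall δ (ENNReal.coe_pos.1 hδ)
  have hxδ : maxWeight w univ (o, x) < δ :=
    (maxWeight_univ_left ho x).trans_lt (ENNReal.coe_lt_coe.2 hx)
  exact ⟨x, hxo, hxδ.trans hδε⟩

end MaxWeight

/-- There are a countable set `X` and weight structures `d, m`
satisfying (0), (s), (Σ) with `ψ(d) = ψ(m)` but `ψ(d ⊓ m) ≠ ψ(d)` (pointwise infimum);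
hence the fibers of `ψ` need not be closed under binary pointwise meets. -/
theorem stmt11 :
    ∃ (X : Type) (_ : Countable X) (d m : X × X → ℝ≥0∞),
      (Ax0 d ∧ AxSep d ∧ AxSym d) ∧ (Ax0 m ∧ AxSep m ∧ AxSym m) ∧
      psi d = psi m ∧ psi (d ⊓ m) ≠ psi d := by
  have hzero : ∀ x : ℚ≥0, (x : ℝ≥0) = 0 → x = 0 := fun x => NNRat.cast_eq_zero.1
  have hsmall : ∀ ε : ℝ≥0, ε > 0 → ∃ x : ℚ≥0, x ≠ 0 ∧ (x : ℝ≥0) < ε := fun ε hε => by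
    obtain ⟨n, hn⟩ := exists_nat_one_div_lt hε
    exact ⟨1 / (n + 1), by positivity, by simpa using hn⟩
  let w : ℚ≥0 → ℝ≥0 := (↑)
  let S : Set (ℚ≥0 × ℚ≥0) := pairsThrough 0
  have hS (x y : ℚ≥0) : (x, y) ∈ S ↔ (y, x) ∈ S := or_comm
  have hd : psi (maxWeight w S) = ⊥ :=
    psi_maxWeight_pairsThrough_eq_bot hzero one_ne_zero two_ne_zero (by norm_num)
  have hm : psi (maxWeight w Sᶜ) = ⊥ := psi_maxWeight_compl_pairsThrough_eq_bot hzero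
  refine ⟨ℚ≥0, inferInstance, maxWeight w S, maxWeight w Sᶜ,
    ⟨ax0_maxWeight, axSep_maxWeight hzero, axSym_maxWeight hS⟩,
    ⟨ax0_maxWeight, axSep_maxWeight hzero, axSym_maxWeight fun x y => (hS x y).not⟩,
    hd.trans hm.symm, ?_⟩
  rw [maxWeight_inf_maxWeight, union_compl_self, hd]
  exact psi_maxWeight_univ_ne_bot NNRat.cast_zero hsmall
end

section
/- Let X be a set and let d, m : X × X → [0,∞] be weight structures. Then φ(d ⊓ m) = φ(d) ⊓ φ(m), where d ⊓ m denotes the pointwise infimum (d ⊓ m)(x,y) = min(d(x,y), m(x,y)), and φ(d) ⊓ φ(m) is the meet of the two topologies in the lattice of topologies ordered by inclusion of open sets; equivalently, a set O ⊆ X is φ(d ⊓ m)-open if and only if it is both φ(d)-open and φ(m)-open. Consequently φ preserves binary meets. -/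
open scoped ENNReal

/-- `O` is `φ(d)`-open: every point of `O` has some ball around it inside `O`. -/
def phiOpen {X : Type*} (d : X × X → ℝ≥0∞) (O : Set X) : Prop :=
  ∀ x ∈ O, ∃ ε : ℝ≥0∞, 0 < ε ∧ {y : X | d (x, y) < ε} ⊆ O

theorem setOf_inf_lt {α β : Type*} [LinearOrder β] (f g : α → β) (c : β) :
    {a | (f ⊓ g) a < c} = {a | f a < c} ∪ {a | g a < c} :=
  Set.ext fun _ => inf_lt_iff

namespace phiOpen

variable {X : Type*} {d m : X × X → ℝ≥0∞} {O : Set X}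

theorem mono (hdm : d ≤ m) (hO : phiOpen d O) : phiOpen m O := by
  intro x hx
  obtain ⟨ε, hε, hball⟩ := hO x hx
  exact ⟨ε, hε, fun y hy => hball ((hdm (x, y)).trans_lt hy)⟩

theorem inf (hd : phiOpen d O) (hm : phiOpen m O) : phiOpen (d ⊓ m) O := by
  intro x hx
  obtain ⟨ε, hε, hdO⟩ := hd x hx
  obtain ⟨δ, hδ, hmO⟩ := hm x hx
  refine ⟨min ε δ, lt_min hε hδ, ?_⟩
  calc {y | (d ⊓ m) (x, y) < min ε δ}
      = {y | d (x, y) < min ε δ} ∪ {y | m (x, y) < min ε δ} :=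
        setOf_inf_lt (fun y => d (x, y)) (fun y => m (x, y)) _
    _ ⊆ {y | d (x, y) < ε} ∪ {y | m (x, y) < δ} :=
        Set.union_subset_union (fun _ hy => hy.trans_le (min_le_left ε δ))
          (fun _ hy => hy.trans_le (min_le_right ε δ))
    _ ⊆ O := Set.union_subset hdO hmO

end phiOpen

/-- `φ(d ⊓ m) = φ(d) ⊓ φ(m)`: a set is `φ(d ⊓ m)`-open (for the pointwise
infimum `d ⊓ m`) if and only if it is both `φ(d)`-open and `φ(m)`-open.  Hence `φ`
preserves binary meets. -/
theorem stmt13 (X : Type*) (d m : X × X → ℝ≥0∞) :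
    ∀ O : Set X, phiOpen (d ⊓ m) O ↔ phiOpen d O ∧ phiOpen m O := by
  intro O
  constructor
  · exact fun h => ⟨h.mono inf_le_left, h.mono inf_le_right⟩
  · exact fun ⟨hd, hm⟩ => hd.inf hm
end

section
/- Let X be a set and let d : X × X → [0,∞] satisfy axioms (0), (Σ) and (Δ). Call d 1-elementarily maximal if there is no m : X × X → [0,∞] satisfying (0), (Σ) and (Δ) with d ≤ m pointwise and d ≠ m, for which there exist points x, y ∈ X such that m(u,v) = d(u,v) for all pairs (u,v) with {u,v} ≠ {x,y}. Then d is 1-elementarily maximal if and only if for all x ≠ y in X, d(x,y) = inf_{z ∈ X \ {x,y}} (d(x,z) + d(z,y)) (the infimum over the empty set being ∞); equivalently, for all x ≠ y, d(x,y) is not strictly smaller than that infimum (the reverse inequality being automatic from the triangle inequality). -/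
open scoped ENNReal

/-- `d` is 1-elementarily maximal: there is no weight structure `m` satisfying (0), (Σ),
(Δ) with `d ≤ m`, `d ≠ m`, agreeing with `d` except on a single unordered pair `{x,y}`. -/
def OneElemMax {X : Type*} (d : X × X → ℝ≥0∞) : Prop :=
  ¬ ∃ m : X × X → ℝ≥0∞, Ax0 m ∧ AxSym m ∧ AxTri m ∧ d ≤ m ∧ d ≠ m ∧
      ∃ x y : X, ∀ u v : X, ({u, v} : Set X) ≠ {x, y} → m (u, v) = d (u, v)

/-! Raising `d` on the pair `{x, y}` alone can only break triangle inequalities whose long side is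
`{x, y}`, and these hold precisely as long as the new value is at most the infimum of the lengths
of the detours `x → z → y`, an infimum the change does not affect. -/

section WeightStructure

variable {X : Type*} {d m : X × X → ℝ≥0∞} {x y u v : X} {r : ℝ≥0∞}

theorem AxSym.eq_of_pair_eq (hS : AxSym d) (h : ({u, v} : Set X) = {x, y}) :
    d (u, v) = d (x, y) := by
  obtain ⟨rfl, rfl⟩ | ⟨rfl, rfl⟩ := Set.pair_eq_pair_iff.1 h
  · rfl
  · exact hS u v

/-- The infimum of the lengths of the detours from `p.1` to `p.2` through a third point `z`: the
upper bound which the triangle inequality imposes on the value at `p`. It is `∞` if there is no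
third point. -/
noncomputable def detour (d : X × X → ℝ≥0∞) (p : X × X) : ℝ≥0∞ :=
  ⨅ z ∈ ({p.1, p.2}ᶜ : Set X), d (p.1, z) + d (z, p.2)

theorem detour_le {z : X} (hzx : z ≠ x) (hzy : z ≠ y) :
    detour d (x, y) ≤ d (x, z) + d (z, y) :=
  iInf₂_le z (by simp [hzx, hzy])

theorem AxTri.le_detour (hT : AxTri d) : d ≤ detour d :=
  fun p => le_iInf₂ fun z _ => hT p.1 z p.2

protected theorem AxSym.detour (hS : AxSym d) : AxSym (detour d) := by
  intro x y
  refine iInf_congr fun z => iInf_congr_Prop (by rw [Set.pair_comm]) fun _ => ?_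
  rw [hS x z, hS z y, add_comm]

theorem detour_congr (h : ∀ u v : X, ({u, v} : Set X) ≠ {x, y} → m (u, v) = d (u, v)) :
    detour m (x, y) = detour d (x, y) := by
  refine iInf_congr fun z => iInf_congr fun hz => ?_
  have hxz : ({x, z} : Set X) ≠ {x, y} := fun e => hz (e ▸ Set.mem_insert_of_mem x rfl)
  have hzy : ({z, y} : Set X) ≠ {x, y} := fun e => hz (e ▸ Set.mem_insert z {y})
  rw [h x z hxz, h z y hzy]

/-- The function `f` with its value on the unordered pair `{x, y}` replaced by `a`, used to raise
a weight structure on a single pair. The pair is encoded as a set, as in `OneElemMax`. -/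
noncomputable def updatePair {α : Type*} (f : X × X → α) (x y : X) (a : α) : X × X → α :=
  open Classical in fun p => if ({p.1, p.2} : Set X) = {x, y} then a else f p

theorem updatePair_of_eq {α : Type*} {f : X × X → α} {a : α}
    (h : ({u, v} : Set X) = {x, y}) : updatePair f x y a (u, v) = a :=
  if_pos h

theorem updatePair_of_ne {α : Type*} {f : X × X → α} {a : α}
    (h : ({u, v} : Set X) ≠ {x, y}) : updatePair f x y a (u, v) = f (u, v) :=
  if_neg h

protected theorem Ax0.updatePair (h0 : Ax0 d) (hxy : x ≠ y) : Ax0 (updatePair d x y r) := by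
  intro u
  have hne : ({u, u} : Set X) ≠ {x, y} := by
    rw [Ne, Set.pair_eq_pair_iff]
    rintro (⟨rfl, rfl⟩ | ⟨rfl, rfl⟩) <;> exact hxy rfl
  rw [updatePair_of_ne hne, h0 u]

protected theorem AxSym.updatePair (hS : AxSym d) : AxSym (updatePair d x y r) := by
  intro u v
  by_cases h : ({u, v} : Set X) = {x, y}
  · rw [updatePair_of_eq h, updatePair_of_eq (Set.pair_comm u v ▸ h)]
  · rw [updatePair_of_ne h, updatePair_of_ne (Set.pair_comm u v ▸ h), hS]

theorem AxSym.le_updatePair (hS : AxSym d) (hr : d (x, y) ≤ r) : d ≤ updatePair d x y r := by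
  rintro ⟨u, v⟩
  by_cases h : ({u, v} : Set X) = {x, y}
  · rwa [updatePair_of_eq h, hS.eq_of_pair_eq h]
  · exact (updatePair_of_ne h).ge

protected theorem AxTri.updatePair (hT : AxTri d) (hS : AxSym d) (hr : d (x, y) ≤ r)
    (hr' : r ≤ detour d (x, y)) : AxTri (updatePair d x y r) := by
  intro u v w
  have hle := hS.le_updatePair hr
  by_cases h : ({u, w} : Set X) = {x, y}
  · obtain rfl | hvu := eq_or_ne v u
    · exact le_add_self
    obtain rfl | hvw := eq_or_ne v w
    · exact le_self_add
    calc
      updatePair d x y r (u, w) = r := updatePair_of_eq h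
      _ ≤ detour d (x, y) := hr'
      _ = detour d (u, w) := (hS.detour.eq_of_pair_eq h).symm
      _ ≤ d (u, v) + d (v, w) := detour_le hvu hvw
      _ ≤ _ := add_le_add (hle (u, v)) (hle (v, w))
  · calc
      updatePair d x y r (u, w) = d (u, w) := updatePair_of_ne h
      _ ≤ d (u, v) + d (v, w) := hT u v w
      _ ≤ _ := add_le_add (hle (u, v)) (hle (v, w))

theorem OneElemMax.eq_detour (hmax : OneElemMax d) (h0 : Ax0 d) (hS : AxSym d) (hT : AxTri d)
    (hxy : x ≠ y) : d (x, y) = detour d (x, y) := by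
  by_contra hne
  have hle : d (x, y) ≤ detour d (x, y) := hT.le_detour (x, y)
  have hd_ne : d ≠ updatePair d x y (detour d (x, y)) := fun heq =>
    hne ((congrFun heq (x, y)).trans (updatePair_of_eq rfl))
  exact hmax ⟨updatePair d x y (detour d (x, y)), h0.updatePair hxy, hS.updatePair,
    hT.updatePair hS hle le_rfl, hS.le_updatePair hle, hd_ne, x, y, fun _ _ => updatePair_of_ne⟩

theorem oneElemMax_of_detour_le (hS : AxSym d)
    (h : ∀ x y : X, x ≠ y → detour d (x, y) ≤ d (x, y)) : OneElemMax d := by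
  rintro ⟨m, hm0, hmS, hmT, hle, hne, x, y, hm⟩
  have hxy_le : m (x, y) ≤ d (x, y) := by
    obtain rfl | hxy := eq_or_ne x y
    · exact (hm0 x).trans_le zero_le
    calc
      m (x, y) ≤ detour m (x, y) := hmT.le_detour (x, y)
      _ = detour d (x, y) := detour_congr hm
      _ ≤ d (x, y) := h x y hxy
  have hmd : m ≤ d := by
    rintro ⟨u, v⟩
    by_cases huv : ({u, v} : Set X) = {x, y}
    · rwa [hmS.eq_of_pair_eq huv, hS.eq_of_pair_eq huv]
    · exact (hm u v huv).le
  exact hne (le_antisymm hle hmd)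

end WeightStructure

/-- For `d` satisfying (0), (Σ), (Δ): `d` is 1-elementarily maximal iff
for all `x ≠ y`, `d(x,y) = ⨅_{z ∉ {x,y}} (d(x,z) + d(z,y))` (the infimum over the empty
set being `∞`). -/
theorem stmt17 (X : Type*) (d : X × X → ℝ≥0∞)
    (h0 : Ax0 d) (hS : AxSym d) (hT : AxTri d) :
    OneElemMax d ↔ ∀ x y : X, x ≠ y →
      d (x, y) = ⨅ z ∈ ({x, y}ᶜ : Set X), d (x, z) + d (z, y) := by
  constructor
  · intro hmax x y hxy
    exact hmax.eq_detour h0 hS hT hxy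
  · intro h
    exact oneElemMax_of_detour_le hS fun x y hxy => (h x y hxy).ge
end

section
/- Let X be a set and let d : X × X → [0,∞] satisfy axioms (0), (s), (Σ) and (Δ) (an extended metric). Suppose d is Menger convex: for all x ≠ y and every r with 0 < r < d(x,y) there exists p ∈ X with d(x,p) = r and d(p,y) = d(x,y) − r. Then d is 1-elementarily maximal: there is no m : X × X → [0,∞] satisfying (0), (Σ) and (Δ) with d ≤ m pointwise and d ≠ m, for which there exist points x, y ∈ X such that m(u,v) = d(u,v) for all pairs (u,v) with {u,v} ≠ {x,y}. -/
open scoped ENNReal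

/-!
If `p` lies between `x` and `y` and differs from both, then neither `{x, p}` nor `{p, y}` is the
pair `{x, y}`, so a competitor `m` that differs from `d` only on `{x, y}` agrees with `d` on both
legs, and (Δ) for `m` gives `m (x, y) ≤ d (x, p) + d (p, y) ≤ d (x, y)`. Only the existence of
one such `p` matters, not its position; in a Menger convex space any `0 < r < d (x, y)`
provides one.
-/

section BetweenPoints

variable {X : Type*} {d m : X × X → ℝ≥0∞}

/-- Menger convexity with prescribed distances: a point at every distance `r` strictly between
`0` and `d (x, y)` along the way from `x` to `y`. -/
def MengerConvex (d : X × X → ℝ≥0∞) : Prop :=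
  ∀ x y : X, x ≠ y → ∀ r : ℝ≥0∞, 0 < r → r < d (x, y) →
    ∃ p : X, d (x, p) = r ∧ d (p, y) = d (x, y) - r

/-- Menger's betweenness condition: distinct points at finite distance have a third point between
them, at no prescribed distance. Since `d` need not satisfy (Δ), betweenness is encoded by `≤`,
which under (Δ) is equality. -/
def HasBetweenPoints (d : X × X → ℝ≥0∞) : Prop :=
  ∀ x y : X, x ≠ y → d (x, y) ≠ ∞ →
    ∃ p : X, p ≠ x ∧ p ≠ y ∧ d (x, p) + d (p, y) ≤ d (x, y)

theorem AxSep.ne_zero_of_ne (hs : AxSep d) (hS : AxSym d) {x y : X} (hxy : x ≠ y) :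
    d (x, y) ≠ 0 :=
  fun h => hxy (hs x y h ((hS y x).trans h))

theorem Ax0.ne_of_ne_zero (h0 : Ax0 d) {x y : X} (h : d (x, y) ≠ 0) : x ≠ y := by
  rintro rfl
  exact h (h0 x)

theorem MengerConvex.hasBetweenPoints (hd : MengerConvex d) (h0 : Ax0 d)
    (hpos : ∀ x y : X, x ≠ y → d (x, y) ≠ 0) : HasBetweenPoints d := by
  intro x y hxy hfin
  have hhalf_pos : 0 < d (x, y) / 2 := ENNReal.half_pos (hpos x y hxy)
  have hhalf_lt : d (x, y) / 2 < d (x, y) := ENNReal.half_lt_self (hpos x y hxy) hfin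
  obtain ⟨p, hxp, hpy⟩ := hd x y hxy _ hhalf_pos hhalf_lt
  have hxp_ne : x ≠ p := h0.ne_of_ne_zero (hxp ▸ hhalf_pos.ne')
  have hpy_ne : p ≠ y := h0.ne_of_ne_zero (hpy ▸ (tsub_pos_of_lt hhalf_lt).ne')
  refine ⟨p, hxp_ne.symm, hpy_ne, ?_⟩
  rw [hxp, hpy, add_tsub_cancel_of_le hhalf_lt.le]

theorem AxTri.le_of_eq_off_pair (hm : AxTri m) {x y p : X}
    (heq : ∀ u v : X, ({u, v} : Set X) ≠ {x, y} → m (u, v) = d (u, v))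
    (hpx : p ≠ x) (hpy : p ≠ y) (hp : d (x, p) + d (p, y) ≤ d (x, y)) :
    m (x, y) ≤ d (x, y) := by
  have hp_notMem : p ∉ ({x, y} : Set X) := by simp [hpx, hpy]
  have hm_xp : m (x, p) = d (x, p) := heq x p fun h => hp_notMem (h ▸ by simp)
  have hm_py : m (p, y) = d (p, y) := heq p y fun h => hp_notMem (h ▸ by simp)
  calc
    m (x, y) ≤ m (x, p) + m (p, y) := hm x p y
    _ = d (x, p) + d (p, y) := by rw [hm_xp, hm_py]
    _ ≤ d (x, y) := hp

theorem HasBetweenPoints.le_of_eq_off_pair (hd : HasBetweenPoints d) (hm0 : Ax0 m)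
    (hmT : AxTri m) {x y : X}
    (heq : ∀ u v : X, ({u, v} : Set X) ≠ {x, y} → m (u, v) = d (u, v)) : m ≤ d := by
  rintro ⟨u, v⟩
  by_cases hpair : ({u, v} : Set X) = {x, y}
  · rcases eq_or_ne u v with rfl | huv
    · exact (hm0 u).trans_le zero_le
    rcases eq_or_ne (d (u, v)) ∞ with htop | hfin
    · exact le_top.trans_eq htop.symm
    obtain ⟨p, hpu, hpv, hp⟩ := hd u v huv hfin
    exact hmT.le_of_eq_off_pair (hpair ▸ heq) hpu hpv hp
  · exact (heq u v hpair).le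

theorem stmt18_general (hd : HasBetweenPoints d) : OneElemMax d := by
  rintro ⟨m, hm0, -, hmT, hle, hne, x, y, heq⟩
  exact hne (hle.antisymm (hd.le_of_eq_off_pair hm0 hmT heq))

end BetweenPoints

/-- Every Menger convex extended metric (axioms (0), (s), (Σ), (Δ)) is
1-elementarily maximal.  Subtraction in `[0,∞]` is truncated subtraction. -/
theorem stmt18 (X : Type*) (d : X × X → ℝ≥0∞)
    (h0 : Ax0 d) (hs : AxSep d) (hS : AxSym d) (hT : AxTri d)
    (hMenger : ∀ x y : X, x ≠ y → ∀ r : ℝ≥0∞, 0 < r → r < d (x, y) →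
      ∃ p : X, d (x, p) = r ∧ d (p, y) = d (x, y) - r) :
    OneElemMax d :=
  stmt18_general <|
    MengerConvex.hasBetweenPoints hMenger h0 fun _ _ => hs.ne_zero_of_ne hS
end
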